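/- Let k ∈ [n] with k ≥ 2, set i = 2k−1, and let X be a real (n−1)×2n matrix and L : NC_n → ℝ with Δ_I(X) = Σ_{σ ∈ E(I)} L_σ for every (n−1)-subset I ⊆ [2n]. Fix t ∈ ℝ and let X′ = X·u_i(t), where u_i(t) = x_i(t)·y_{i−1}(t) (so X′ is obtained from X by adding t times column i to column i+1 and t times column i to column i−1). Define L′ : NC_n → ℝ by: L′_σ = L_σ + t·Σ_κ L_κ if {k̄} is a singleton block of σ, where κ ranges over all noncrossing partitions obtained from σ by joining k̄ to exactly one other block of σ; and L′_σ = L_σ if {k̄} is not a singleton block of σ. Then Δ_I(X′) = Σ_{σ ∈ E(I)} L′_σ for every (n−1)-subset I ⊆ [2n]. -/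

import Mathlib

open Finset

noncomputable section
open scoped Classical

/-- The cyclic (clockwise) half-open interval `(a, b]` in `Fin m`. -/
def cIoc {m : ℕ} (a b : Fin m) : Finset (Fin m) :=
  univ.filter fun k => if a < b then a < k ∧ k ≤ b else a < k ∨ k ≤ b

/-- The open cyclic (clockwise) arc from `a` to `b` in `Fin m`, excluding both endpoints. -/
def cIoo {m : ℕ} (a b : Fin m) : Finset (Fin m) :=
  univ.filter fun k => if a < b then a < k ∧ k < b else (a < k ∨ k < b) ∧ k ≠ a ∧ k ≠ b

/-- Set partitions of `[n] = Fin n`. -/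
abbrev NCP (n : ℕ) := Finpartition (univ : Finset (Fin n))

/-- `a` and `b` lie in the same block of `σ`. -/
def sameBlock {n : ℕ} (σ : NCP n) (a b : Fin n) : Prop :=
  ∃ B ∈ σ.parts, a ∈ B ∧ b ∈ B

/-- `σ` is a noncrossing partition: there are no `a < b < c < d` with `a, c` in one
block and `b, d` in a different block. -/
def IsNoncrossing {n : ℕ} (σ : NCP n) : Prop :=
  ∀ a b c d : Fin n, a < b → b < c → c < d →
    sameBlock σ a c → sameBlock σ b d → sameBlock σ a b

/-- The relation defining the dual (Kreweras complement) partition: `ĩ ~ j̃` iff no block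
of `σ` meets both cyclic intervals `{(i+1), …, j}` and `{(j+1), …, i}`. -/
def dualRel {n : ℕ} (σ : NCP n) (i j : Fin n) : Prop :=
  i = j ∨ ¬ ∃ B ∈ σ.parts, (B ∩ cIoc i j).Nonempty ∧ (B ∩ cIoc j i).Nonempty

/-- The point `ī` of `[2n]` (0-based: `ī = 2i`). -/
def bar {n : ℕ} (i : Fin n) : Fin (2*n) := ⟨2*(i:ℕ), by have := i.isLt; omega⟩

/-- The point `ĩ` of `[2n]` (0-based: `ĩ = 2i+1`). -/
def til {n : ℕ} (i : Fin n) : Fin (2*n) := ⟨2*(i:ℕ)+1, by have := i.isLt; omega⟩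

/-- A matching (fixed-point-free involution) of `Fin m`. -/
def IsMatching {m : ℕ} (τ : Fin m → Fin m) : Prop :=
  Function.Involutive τ ∧ ∀ i, τ i ≠ i

/-- A noncrossing matching: there are no `a < b < c < d` with `τ a = c` and `τ b = d`. -/
def IsNCMatching {m : ℕ} (τ : Fin m → Fin m) : Prop :=
  ¬ ∃ a b c d : Fin m, a < b ∧ b < c ∧ c < d ∧ τ a = c ∧ τ b = d

/-- `j` is the cyclic predecessor of `i` in the block of `σ` containing `i`
(`j = i` when `i` is a singleton). -/
def cyclicPred {n : ℕ} (σ : NCP n) (j i : Fin n) : Prop :=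
  ∃ B ∈ σ.parts, i ∈ B ∧ j ∈ B ∧ ∀ x ∈ B, x ∉ cIoo j i

/-- `m` is the medial pairing of `σ`: it pairs `ī` (0-based `2i`) with `j̃` (0-based `2j+1`),
where `j` is the cyclic predecessor of `i` in its block. -/
def IsMedialOf {n : ℕ} (σ : NCP n) (m : Fin (2*n) → Fin (2*n)) : Prop :=
  ∀ i j : Fin n, m (bar i) = til j ↔ cyclicPred σ j i

/-- The crossing number of a matching: the number of pairs `{a,b}` with
`a < b < τ a < τ b`. -/
def crossNum {m : ℕ} (τ : Fin m → Fin m) : ℕ :=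
  ((univ : Finset (Fin m × Fin m)).filter fun p =>
    p.1 < p.2 ∧ p.2 < τ p.1 ∧ τ p.1 < τ p.2).card

/-- `a`, `b`, `c`, `d` are distinct and in cyclic order on `Fin m`. -/
def CyclicOrder4 {m : ℕ} (a b c d : Fin m) : Prop :=
  (a < b ∧ b < c ∧ c < d) ∨ (b < c ∧ c < d ∧ d < a) ∨
  (c < d ∧ d < a ∧ a < b) ∨ (d < a ∧ a < b ∧ b < c)

/-- `τ` covers `τ'` in the uncrossing order. -/
def UncrossCover {m : ℕ} (τ' τ : Fin m → Fin m) : Prop :=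
  IsMatching τ' ∧ IsMatching τ ∧
  ∃ a b c d : Fin m, CyclicOrder4 a b c d ∧ τ a = c ∧ τ b = d ∧
    (∀ x, x ≠ a → x ≠ b → x ≠ c → x ≠ d → τ' x = τ x) ∧
    ((τ' a = d ∧ τ' b = c ∧ ∀ x ∈ cIoo a b, τ x ∉ cIoo c d) ∨
     (τ' a = b ∧ τ' c = d ∧ ∀ x ∈ cIoo b c, τ x ∉ cIoo d a))

/-- The uncrossing partial order on matchings: reflexive-transitive closure of covers. -/
def uncrossLE {m : ℕ} (τ' τ : Fin m → Fin m) : Prop :=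
  Relation.ReflTransGen UncrossCover τ' τ

/-- An affine permutation of period `m`. -/
def IsAffinePerm (m : ℕ) (f : ℤ → ℤ) : Prop :=
  Function.Bijective f ∧ ∀ i : ℤ, f (i + m) = f i + m

/-- The length of an affine permutation of period `m`:
`#{(i,j) : 1 ≤ i ≤ m, i < j, f i > f j}`. -/
def affLen (m : ℕ) (f : ℤ → ℤ) : ℕ :=
  Set.ncard {p : ℤ × ℤ | 1 ≤ p.1 ∧ p.1 ≤ (m:ℤ) ∧ p.1 < p.2 ∧ f p.2 < f p.1}

/-- The affine rank matrix `r_f(i,j) = #{a ≤ i : f a ≥ j}`. -/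
def rankMat (f : ℤ → ℤ) (i j : ℤ) : ℕ :=
  Set.ncard {a : ℤ | a ≤ i ∧ j ≤ f a}

/-- Affine Bruhat order via rank matrices. -/
def bruhatLE (f g : ℤ → ℤ) : Prop := ∀ i j : ℤ, rankMat f i j ≤ rankMat g i j

/-- The sum `Σ_{i=1}^m (f i − i)`. -/
def windowSum (m : ℕ) (f : ℤ → ℤ) : ℤ :=
  ∑ i ∈ Finset.range m, (f ((i:ℤ)+1) - ((i:ℤ)+1))

/-- The affine permutation `g_τ` associated to a matching `τ` of `[2n]`:
on `[2n]`, `g_τ i = τ i` if `τ i > i` and `g_τ i = τ i + 2n` if `τ i < i`,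
extended periodically. -/
def gTau (n : ℕ) (τ : Fin (2*n) → Fin (2*n)) (i : ℤ) : ℤ :=
  if h : (i % ((2*n : ℕ) : ℤ)).toNat < 2*n then
    let r : Fin (2*n) := ⟨(i % ((2*n : ℕ) : ℤ)).toNat, h⟩
    (i - i % ((2*n : ℕ) : ℤ)) +
      (if r < τ r then ((τ r : ℕ) : ℤ) else ((τ r : ℕ) : ℤ) + 2*n)
  else i

/-- `f_τ = g_τ − 1`. -/
def fTau (n : ℕ) (τ : Fin (2*n) → Fin (2*n)) (i : ℤ) : ℤ := gTau n τ i - 1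

/-- An electrical affine permutation for `n`. -/
def IsElectrical (n : ℕ) (f : ℤ → ℤ) : Prop :=
  IsAffinePerm (2*n) f ∧
  (∀ i : ℤ, i ≤ f i ∧ f i ≤ i + 2*n - 2) ∧
  windowSum (2*n) f = ((n:ℤ) - 1) * (2*n) ∧
  ∀ i : ℤ, (f (f i + 1) - (i - 1)) % ((2*n : ℕ) : ℤ) = 0

/-- The Grassmann necklace subset `I_a(f) ⊆ [m]`: representatives in `[m]` (0-based) of
`{f b mod m : b < a and f b ≥ a}`. -/
def necklaceI (m : ℕ) (f : ℤ → ℤ) (a : ℤ) : Finset (Fin m) :=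
  univ.filter fun x => ∃ b : ℤ, b < a ∧ a ≤ f b ∧ f b % (m:ℤ) = ((x:ℕ):ℤ)

/-- The dual necklace subset `J_a(f) ⊆ [m]`: representatives in `[m]` (0-based) of
`{b mod m : b < a and f b ≥ a}`. -/
def necklaceJ (m : ℕ) (f : ℤ → ℤ) (a : ℤ) : Finset (Fin m) :=
  univ.filter fun x => ∃ b : ℤ, b < a ∧ a ≤ f b ∧ b % (m:ℤ) = ((x:ℕ):ℤ)

/-- Dominance order on `k`-element subsets of `Fin m`:
the `r`-th smallest element of `I` is at most the `r`-th smallest element of `J`. -/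
def domLE {m : ℕ} (k : ℕ) (I J : Finset (Fin m)) : Prop :=
  ∃ (hI : I.card = k) (hJ : J.card = k),
    ∀ r : Fin k, I.orderEmbOfFin hI r ≤ J.orderEmbOfFin hJ r

/-- `a`-shifted dominance order: rotate so that `a` becomes least, then compare. -/
def sdomLE {m : ℕ} (k : ℕ) (a : Fin m) (I J : Finset (Fin m)) : Prop :=
  domLE k (I.image (· - a)) (J.image (· - a))

/-- `a`-shifted lexicographic order on subsets of `Fin m`. -/
def lexLE {m : ℕ} (a : Fin m) (I J : Finset (Fin m)) : Prop :=
  I = J ∨ List.Lex (· < ·) ((I.image (· - a)).sort (· ≤ ·)) ((J.image (· - a)).sort (· ≤ ·))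

/-- A Catalan subset of `[2n]` (0-based): an `(n−1)`-subset such that the length-`2n`
word with `U` at positions `{0} ∪ {x+1 : x ∈ I}` and `D` elsewhere is a Dyck path. -/
def IsCatalan {n : ℕ} (I : Finset (Fin (2*n))) : Prop :=
  I.card = n - 1 ∧
  ∀ p : ℕ, p ≤ 2*n →
    p ≤ 2 * ((insert 0 (I.image fun x => (x:ℕ)+1)).filter (· < p)).card

/-- Catalan subset with respect to the shifted order `≤_a`. -/
def IsCatalanAt {n : ℕ} (a : Fin (2*n)) (I : Finset (Fin (2*n))) : Prop :=
  IsCatalan (I.image (· - a))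

/-- The set of maxima of `S` with respect to the `a`-shifted order. -/
def maxAt {m : ℕ} (a : Fin m) (S : Finset (Fin m)) : Finset (Fin m) :=
  S.filter fun x => ∀ y ∈ S, y - a ≤ x - a

/-- `I_a(σ)` for a noncrossing partition `σ`: the complement in `[2n]` of the set of
`≤_a`-maxima of the blocks of `σ` (embedded by `bar`) and of the blocks of the dual
partition `σ̃` (embedded by `til`). -/
def IaP {n : ℕ} (σ : NCP n) (a : Fin (2*n)) : Finset (Fin (2*n)) :=
  univ \ ((σ.parts.biUnion fun B => maxAt a (B.image bar)) ∪
          ((univ : Finset (Fin n)).biUnion fun i =>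
            maxAt a ((univ.filter (dualRel σ i)).image til)))

/-- `I` is concordant with `σ`: `I` has `n−1` elements and every block of `σ` and of
its dual `σ̃` contains exactly one element of `[2n] ∖ I`. -/
def Concordant {n : ℕ} (σ : NCP n) (I : Finset (Fin (2*n))) : Prop :=
  I.card = n - 1 ∧
  (∀ B ∈ σ.parts, ((B.image bar) ∩ (univ \ I)).card = 1) ∧
  (∀ i : Fin n, (((univ.filter (dualRel σ i)).image til) ∩ (univ \ I)).card = 1)

/-- `E(I)`: the set of noncrossing partitions concordant with `I`. -/
def ESet {n : ℕ} (I : Finset (Fin (2*n))) : Set (NCP n) :=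
  {σ | IsNoncrossing σ ∧ Concordant σ I}

/-- The maximal minor `Δ_I(X)` on the columns indexed by `I`, in increasing order. -/
def minorOn {k m : ℕ} (X : Matrix (Fin k) (Fin m) ℝ) (I : Finset (Fin m)) : ℝ :=
  if h : I.card = k then (X.submatrix id fun r => I.orderEmbOfFin h r).det else 0

/-- `X` is totally nonnegative: it has full rank `k` and all maximal minors are `≥ 0`. -/
def IsTNN {k m : ℕ} (X : Matrix (Fin k) (Fin m) ℝ) : Prop :=
  X.rank = k ∧ ∀ I : Finset (Fin m), I.card = k → 0 ≤ minorOn X I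

/-- `t` times the matrix unit `E_{p,q}` (0-based indices). -/
def matE (m : ℕ) (p q : ℕ) (t : ℝ) : Matrix (Fin m) (Fin m) ℝ :=
  Matrix.of fun r s => if (r:ℕ) = p ∧ (s:ℕ) = q then t else 0

/-- `x_i(t) = Id + t·E_{i,i+1}` (1-based index `i`). -/
def xB (m i : ℕ) (t : ℝ) : Matrix (Fin m) (Fin m) ℝ := 1 + matE m (i-1) i t

/-- `y_i(t) = Id + t·E_{i+1,i}` (1-based index `i`). -/
def yB (m i : ℕ) (t : ℝ) : Matrix (Fin m) (Fin m) ℝ := 1 + matE m i (i-1) t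

/-- `u_i(t) = x_i(t)·y_{i−1}(t)` (1-based index `i`). -/
def uB (m i : ℕ) (t : ℝ) : Matrix (Fin m) (Fin m) ℝ := xB m i t * yB m (i-1) t

/-- The columns of `X`, extended `n`-periodically to all integer indices (0-based). -/
def colP {k n : ℕ} (X : Matrix (Fin k) (Fin n) ℝ) (i : ℤ) : Fin k → ℝ :=
  fun r => if h : (i % (n:ℤ)).toNat < n then X r ⟨(i % (n:ℤ)).toNat, h⟩ else 0

/-- `f_X(i) = min { j ≥ i : v_i ∈ span(v_{i+1}, …, v_j) }` (0-based columns). -/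
def fX {k n : ℕ} (X : Matrix (Fin k) (Fin n) ℝ) (i : ℤ) : ℤ :=
  sInf {j : ℤ | i ≤ j ∧ colP X i ∈ Submodule.span ℝ (colP X '' Set.Ioc i j)}

/-- Fintype instance for finite partitions of a finite set. -/
instance {α : Type*} [DecidableEq α] [Fintype α] (s : Finset α) : Fintype (Finpartition s) :=
  Fintype.ofInjective Finpartition.parts fun _ _ h => Finpartition.ext h

/-- The sorted list of (the values of) a subset of `Fin m`. -/
def sortedL {m : ℕ} (I : Finset (Fin m)) : List ℕ :=
  (I.sort (· ≤ ·)).map Fin.val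

/-- The number of inversions of a list (= the number of adjacent transpositions
needed to sort it, when entries are distinct). -/
def invNum (l : List ℕ) : ℕ :=
  ((Finset.range l.length ×ˢ Finset.range l.length).filter fun pq =>
    pq.1 < pq.2 ∧ l.getD pq.2 0 < l.getD pq.1 0).card

/-- The subset of `Fin m` whose values lie in the list `l`. -/
def toFinF {m : ℕ} (l : List ℕ) : Finset (Fin m) :=
  univ.filter fun x => (x:ℕ) ∈ l

/-- The double sum `Σ_{σ ∈ E(l), κ ∈ E(l')} L σ · L κ`, where `E` of a list with a
repeated entry (or an out-of-range entry) is empty. -/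
def pairSum {n : ℕ} (L : NCP n → ℝ) (l l' : List ℕ) : ℝ :=
  if (l.Nodup ∧ ∀ x ∈ l, x < 2*n) ∧ (l'.Nodup ∧ ∀ x ∈ l', x < 2*n) then
    ∑ᶠ σ ∈ ESet (n := n) (toFinF l), ∑ᶠ κ ∈ ESet (n := n) (toFinF l'), L σ * L κ
  else 0

/-- The list obtained from `LI` by replacing its entries at the positions in `S`
(in increasing order of position) by the first `#S` entries of `LJ`. -/
def swapI (LI LJ : List ℕ) (S : Finset ℕ) : List ℕ :=
  (List.range LI.length).map fun p =>
    if p ∈ S then LJ.getD ((S.filter (· < p)).card) 0 else LI.getD p 0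

/-- The list obtained from `LJ` by replacing its first `#S` entries by the entries of
`LI` at the positions in `S`, in increasing order. -/
def swapJ (LI LJ : List ℕ) (S : Finset ℕ) : List ℕ :=
  (List.range LJ.length).map fun p =>
    if p < S.card then LI.getD ((S.sort (· ≤ ·)).getD p 0) 0 else LJ.getD p 0

/-- the set of noncrossing partitions obtained from `σ` by merging the singleton
block `{kb}` into one other block of `σ` -/
def mergeSet {n : ℕ} (kb : Fin n) (σ : NCP n) : Set (NCP n) :=
  {κ | IsNoncrossing κ ∧ ∃ B ∈ σ.parts, B ≠ {kb} ∧
    κ.parts = insert (insert kb B) ((σ.parts.erase B).erase {kb})}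

lemma til_injective {n : ℕ} : Function.Injective (til : Fin n → Fin (2 * n)) := by
  intro a b h
  simp only [til, Fin.mk.injEq] at h
  exact Fin.ext (by omega)

lemma bar_injective {n : ℕ} : Function.Injective (bar : Fin n → Fin (2 * n)) := by
  intro a b h
  simp only [bar, Fin.mk.injEq] at h
  exact Fin.ext (by omega)

lemma bar_ne_til {n : ℕ} (a b : Fin n) : bar a ≠ til b := by
  simp only [bar, til, ne_eq, Fin.mk.injEq]
  omega

lemma sameBlock_iff_part_eq {n : ℕ} (σ : NCP n) (a b : Fin n) :
    sameBlock σ a b ↔ σ.part a = σ.part b := by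
  constructor
  · rintro ⟨B, hB, ha, hb⟩
    rw [σ.part_eq_of_mem hB ha, σ.part_eq_of_mem hB hb]
  · intro h
    exact ⟨σ.part a, σ.part_mem.2 (mem_univ a), σ.mem_part (mem_univ a),
      h ▸ σ.mem_part (mem_univ b)⟩

lemma sameBlock_equivalence {n : ℕ} (σ : NCP n) : Equivalence (sameBlock σ) := by
  simp only [funext fun a => funext fun b => propext (sameBlock_iff_part_eq σ a b)]
  exact ⟨fun _ => rfl, fun h => h.symm, fun h h' => h.trans h'⟩

lemma sameBlock_iff_mem {n : ℕ} {σ : NCP n} {B : Finset (Fin n)} (hB : B ∈ σ.parts)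
    {a b : Fin n} (ha : a ∈ B) : sameBlock σ a b ↔ b ∈ B := by
  constructor
  · rintro ⟨C, hC, ha', hb⟩
    rwa [σ.eq_of_mem_parts hB hC ha ha']
  · exact fun hb => ⟨B, hB, ha, hb⟩

lemma parts_subset_of_sameBlock {n : ℕ} {σ τ : NCP n}
    (h : ∀ a b, sameBlock σ a b ↔ sameBlock τ a b) : σ.parts ⊆ τ.parts := by
  intro B hB
  obtain ⟨a, ha⟩ := σ.nonempty_of_mem_parts hB
  have : B = τ.part a := by
    ext b
    rw [← sameBlock_iff_mem hB ha, h,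
      sameBlock_iff_mem (τ.part_mem.2 (mem_univ a)) (τ.mem_part (mem_univ a))]
  exact this ▸ τ.part_mem.2 (mem_univ a)

lemma ncp_ext_sameBlock {n : ℕ} {σ τ : NCP n}
    (h : ∀ a b, sameBlock σ a b ↔ sameBlock τ a b) : σ = τ :=
  Finpartition.ext ((parts_subset_of_sameBlock h).antisymm
    (parts_subset_of_sameBlock fun a b => (h a b).symm))

lemma dualRel_iff {n : ℕ} (σ : NCP n) (i j : Fin n) :
    dualRel σ i j ↔ ∀ a b, sameBlock σ a b → ((a ≤ i ↔ a ≤ j) ↔ (b ≤ i ↔ b ≤ j)) := by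
  have key : ∀ i j : Fin n, i < j → ((∃ B ∈ σ.parts, (B ∩ cIoc i j).Nonempty ∧
      (B ∩ cIoc j i).Nonempty) ↔ ∃ a b, sameBlock σ a b ∧ ¬ (a ≤ i ↔ a ≤ j) ∧ (b ≤ i ↔ b ≤ j)) := by
    intro i j hij
    have h1 : ∀ x, x ∈ cIoc i j ↔ ¬ (x ≤ i ↔ x ≤ j) := by
      intro x; simp only [cIoc, mem_filter, mem_univ, true_and, hij, if_true]; grind
    have h2 : ∀ x, x ∈ cIoc j i ↔ (x ≤ i ↔ x ≤ j) := by
      intro x; simp only [cIoc, mem_filter, mem_univ, true_and, hij.not_gt, if_false]; grind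
    simp only [Finset.Nonempty, mem_inter, h1, h2, sameBlock]
    grind
  unfold dualRel
  have hs : ∀ a b, sameBlock σ a b → sameBlock σ b a := fun a b => (sameBlock_equivalence σ).symm
  rcases lt_trichotomy i j with h | h | h
  · rw [key i j h]
    grind
  · subst h
    simp
  · have h' := key j i h
    have : (∃ B ∈ σ.parts, (B ∩ cIoc i j).Nonempty ∧ (B ∩ cIoc j i).Nonempty) ↔
      (∃ B ∈ σ.parts, (B ∩ cIoc j i).Nonempty ∧ (B ∩ cIoc i j).Nonempty) := by
      simp only [and_comm]
    rw [this, h']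
    grind

lemma dualRel_equivalence {n : ℕ} (σ : NCP n) : Equivalence (dualRel σ) := by
  simp only [funext fun a => funext fun b => propext (dualRel_iff σ a b)]
  refine ⟨fun _ => by simp, fun h a b hab => ?_, fun h h' a b hab => ?_⟩
  · have := h a b hab
    tauto
  · have := h a b hab
    have := h' a b hab
    tauto

lemma card_image_inter_eq_one_iff {α β : Type*} [Fintype β] [DecidableEq β]
    {f : α → β} (hf : Function.Injective f) (S : Finset α) (I : Finset β) :
    (S.image f ∩ (univ \ I)).card = 1 ↔ ∃! b, b ∈ S ∧ f b ∉ I := by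
  classical
  have : S.image f ∩ (univ \ I) = (S.filter fun b => f b ∉ I).image f := by
    ext x
    simp only [mem_inter, mem_image, mem_sdiff, mem_univ, true_and, mem_filter]
    grind
  rw [this, card_image_of_injective _ hf, card_eq_one, singleton_iff_unique_mem]
  simp

lemma concordant_iff {n : ℕ} (σ : NCP n) (I : Finset (Fin (2 * n))) :
    Concordant σ I ↔ I.card = n - 1 ∧ (∀ a, ∃! b, sameBlock σ a b ∧ bar b ∉ I) ∧
      ∀ i, ∃! j, dualRel σ i j ∧ til j ∉ I := by
  simp only [Concordant, card_image_inter_eq_one_iff bar_injective,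
    card_image_inter_eq_one_iff til_injective, mem_filter, mem_univ, true_and]
  refine and_congr_right fun _ => and_congr_left fun _ => ⟨fun h a => ?_, fun h B hB => ?_⟩
  · have hm := σ.part_mem.2 (mem_univ a)
    simpa only [sameBlock_iff_mem hm (σ.mem_part (mem_univ a))] using h _ hm
  · obtain ⟨a, ha⟩ := σ.nonempty_of_mem_parts hB
    simpa only [sameBlock_iff_mem hB ha] using h a

/-- `σ` is obtained from `κ` by splitting off the point `c` as a singleton block. -/
def IsSplit {n : ℕ} (c : Fin n) (κ σ : NCP n) : Prop :=
  ∀ a b, sameBlock σ a b ↔ a = b ∨ (a ≠ c ∧ b ≠ c ∧ sameBlock κ a b)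

lemma singleton_mem_parts_iff {n : ℕ} (c : Fin n) (σ : NCP n) :
    {c} ∈ σ.parts ↔ ∀ b, sameBlock σ c b → b = c := by
  constructor
  · intro h b hb
    simpa using (sameBlock_iff_mem h (mem_singleton_self c)).1 hb
  · intro h
    have hm := σ.part_mem.2 (mem_univ c)
    have : σ.part c = {c} := by
      ext b
      rw [← sameBlock_iff_mem hm (σ.mem_part (mem_univ c)), mem_singleton]
      exact ⟨h b, fun hb => hb ▸ (sameBlock_equivalence σ).refl c⟩
    exact this ▸ hm

lemma IsSplit.singleton_mem {n : ℕ} {c : Fin n} {κ σ : NCP n} (h : IsSplit c κ σ) :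
    {c} ∈ σ.parts := by
  rw [singleton_mem_parts_iff]
  intro b hb
  rcases (h c b).1 hb with h | h
  · exact h.symm
  · exact absurd rfl h.1

lemma IsSplit.unique {n : ℕ} {c : Fin n} {κ σ τ : NCP n} (h : IsSplit c κ σ)
    (h' : IsSplit c κ τ) : σ = τ :=
  ncp_ext_sameBlock fun a b => (h a b).trans (h' a b).symm

lemma exists_isSplit {n : ℕ} (c : Fin n) (κ : NCP n) : ∃ σ : NCP n, IsSplit c κ σ := by
  have he := sameBlock_equivalence κ
  let s : Setoid (Fin n) :=
    { r := fun a b => a = b ∨ (a ≠ c ∧ b ≠ c ∧ sameBlock κ a b)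
      iseqv := by
        refine ⟨fun a => .inl rfl, ?_, ?_⟩
        · rintro a b (h | ⟨h, h', h''⟩)
          · exact .inl h.symm
          · exact .inr ⟨h', h, he.symm h''⟩
        · rintro a b d (rfl | ⟨h, h', h''⟩) (rfl | ⟨g, g', g''⟩)
          · exact .inl rfl
          · exact .inr ⟨g, g', g''⟩
          · exact .inr ⟨h, h', h''⟩
          · exact .inr ⟨h, g', he.trans h'' g''⟩ }
  refine ⟨Finpartition.ofSetoid s, fun a b => ?_⟩
  rw [sameBlock_iff_mem ((Finpartition.ofSetoid s).part_mem.2 (mem_univ a))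
    ((Finpartition.ofSetoid s).mem_part (mem_univ a)), Finpartition.mem_part_ofSetoid_iff_rel]
  exact Iff.rfl

lemma mem_mergeSet_iff {n : ℕ} (c : Fin n) (κ σ : NCP n) :
    ({c} ∈ σ.parts ∧ κ ∈ mergeSet c σ) ↔
      IsNoncrossing κ ∧ (∃ m, m ≠ c ∧ sameBlock κ c m) ∧ IsSplit c κ σ := by
  constructor
  · rintro ⟨hc, hκ, B, hB, hBc, hparts⟩
    have hcB : c ∉ B := fun h =>
      hBc (σ.eq_of_mem_parts hB hc h (mem_singleton_self c))
    have hmem : ∀ C, C ∈ κ.parts ↔ C = insert c B ∨ (C ≠ {c} ∧ C ≠ B ∧ C ∈ σ.parts) := by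
      intro C; rw [hparts]; simp only [mem_insert, mem_erase]
    have hins : insert c B ∈ κ.parts := (hmem _).2 (.inl rfl)
    obtain ⟨m, hm⟩ := σ.nonempty_of_mem_parts hB
    refine ⟨hκ, ⟨m, fun h => hcB (h ▸ hm), _, hins, by simp, by simp [hm]⟩, fun a b => ?_⟩
    constructor
    · rintro ⟨C, hC, ha, hb⟩
      by_cases hCc : C = {c}
      · subst hCc
        simp only [mem_singleton] at ha hb
        exact .inl (ha.trans hb.symm)
      have hcC : c ∉ C := fun h => hCc (σ.eq_of_mem_parts hC hc h (mem_singleton_self c))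
      refine .inr ⟨fun h => hcC (h ▸ ha), fun h => hcC (h ▸ hb), ?_⟩
      by_cases hCB : C = B
      · subst hCB
        exact ⟨_, hins, by simp [ha], by simp [hb]⟩
      · exact ⟨C, (hmem C).2 (.inr ⟨hCc, hCB, hC⟩), ha, hb⟩
    · rintro (rfl | ⟨ha, hb, C, hC, haC, hbC⟩)
      · exact (sameBlock_equivalence σ).refl a
      · rcases (hmem C).1 hC with rfl | ⟨_, _, hC'⟩
        · exact ⟨B, hB, (mem_insert.1 haC).resolve_left ha, (mem_insert.1 hbC).resolve_left hb⟩
        · exact ⟨C, hC', haC, hbC⟩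
  · rintro ⟨hκ, ⟨m, hmc, hm⟩, hs⟩
    have hc := hs.singleton_mem
    have hmp := σ.part_mem.2 (mem_univ m)
    have hmm := σ.mem_part (mem_univ m)
    have hsame : ∀ x, x ∈ σ.part m ↔ x = m ∨ (x ≠ c ∧ sameBlock κ m x) := by
      intro x
      rw [← sameBlock_iff_mem hmp hmm, hs]
      grind
    have he := sameBlock_equivalence κ
    have hA : insert c (σ.part m) = κ.part c := by
      ext x
      rw [mem_insert, hsame, ← sameBlock_iff_mem (κ.part_mem.2 (mem_univ c))
        (κ.mem_part (mem_univ c))]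
      constructor
      · rintro (rfl | rfl | ⟨_, h⟩)
        · exact he.refl _
        · exact hm
        · exact he.trans hm h
      · intro h
        by_cases hx : x = c
        · exact .inl hx
        · exact .inr (.inr ⟨hx, he.trans (he.symm hm) h⟩)
    refine ⟨hc, hκ, σ.part m, hmp, fun h => hmc (by simpa [h] using hmm), ?_⟩
    have hoff : ∀ C : Finset (Fin n), c ∉ C → m ∉ C → (C ∈ σ.parts ↔ C ∈ κ.parts) := by
      intro C h1 h2
      have hrel : ∀ a ∈ C, (∀ b, (b ∈ C ↔ sameBlock σ a b)) ∨ (∀ b, (b ∈ C ↔ sameBlock κ a b)) →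
          ∀ b, sameBlock σ a b ↔ sameBlock κ a b := by
        intro a ha h b
        have hac : a ≠ c := fun h => h1 (h ▸ ha)
        have hr := he.refl a
        have hnc : ¬ sameBlock κ a c := by
          intro hac'
          have ham := he.trans hac' hm
          rcases h with h | h
          · exact h2 ((h m).2 ((hs a m).2 (.inr ⟨hac, hmc, ham⟩)))
          · exact h2 ((h m).2 ham)
        rw [hs]
        constructor
        · rintro (rfl | ⟨_, _, h⟩)
          · exact hr
          · exact h
        · intro h
          exact .inr ⟨hac, fun hb => hnc (hb ▸ h), h⟩
      constructor
      · intro hC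
        obtain ⟨a, ha⟩ := σ.nonempty_of_mem_parts hC
        have : C = κ.part a := by
          ext b
          rw [← sameBlock_iff_mem (κ.part_mem.2 (mem_univ a)) (κ.mem_part (mem_univ a)),
            ← hrel a ha (.inl fun b => (sameBlock_iff_mem hC ha).symm), sameBlock_iff_mem hC ha]
        exact this ▸ κ.part_mem.2 (mem_univ a)
      · intro hC
        obtain ⟨a, ha⟩ := κ.nonempty_of_mem_parts hC
        have : C = σ.part a := by
          ext b
          rw [← sameBlock_iff_mem (σ.part_mem.2 (mem_univ a)) (σ.mem_part (mem_univ a)),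
            hrel a ha (.inr fun b => (sameBlock_iff_mem hC ha).symm), sameBlock_iff_mem hC ha]
        exact this ▸ σ.part_mem.2 (mem_univ a)
    have hmA : m ∈ κ.part c := by simp [← hA, hmm]
    have hcA := κ.mem_part (mem_univ c)
    have hAp := κ.part_mem.2 (mem_univ c)
    ext C
    rw [mem_insert, hA, mem_erase, mem_erase]
    constructor
    · intro hC
      by_cases h : C = κ.part c
      · exact .inl h
      have h1 : c ∉ C := fun h' => h (κ.eq_of_mem_parts hC hAp h' hcA)
      have h2 : m ∉ C := fun h' => h (κ.eq_of_mem_parts hC hAp h' hmA)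
      exact .inr ⟨fun h => h1 (by simp [h]), fun h => h2 (h ▸ hmm), (hoff C h1 h2).2 hC⟩
    · rintro (rfl | ⟨h1, h2, hC⟩)
      · exact hAp
      · exact (hoff C (fun h => h1 (σ.eq_of_mem_parts hC hc h (mem_singleton_self c)))
          (fun h => h2 (σ.eq_of_mem_parts hC hmp h hmm))).1 hC

lemma IsSplit.isNoncrossing {n : ℕ} {c : Fin n} {κ σ : NCP n} (h : IsSplit c κ σ)
    (hκ : IsNoncrossing κ) : IsNoncrossing σ := by
  intro x y z w hxy hyz hzw hxz hyw
  rcases (h x z).1 hxz with h1 | ⟨h1, h2, h3⟩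
  · omega
  rcases (h y w).1 hyw with g1 | ⟨g1, g2, g3⟩
  · omega
  exact (h x y).2 (.inr ⟨h1, g1, hκ x y z w hxy hyz hzw h3 g3⟩)

lemma IsNoncrossing.not_separated {n : ℕ} {κ : NCP n} (h : IsNoncrossing κ) {c m x y : Fin n}
    (hcm : sameBlock κ c m) (hxy : sameBlock κ x y) (hx : ¬ sameBlock κ c x) :
    ((x < c ↔ x < m) ↔ (y < c ↔ y < m)) := by
  have he := sameBlock_equivalence κ
  have hy : ¬ sameBlock κ c y := fun h => hx (he.trans h (he.symm hxy))
  have hmx : ¬ sameBlock κ m x := fun h => hx (he.trans hcm h)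
  have hmy : ¬ sameBlock κ m y := fun h => hy (he.trans hcm h)
  have key : ∀ {c m x y : Fin n}, sameBlock κ c m → sameBlock κ x y → ¬ sameBlock κ c x →
      c < m → x < y → ((x < c ↔ x < m) ↔ (y < c ↔ y < m)) := by
    intro c m x y hcm hxy hx hlt hlt'
    have h1 := fun h1 h2 h3 => hx (h c x m y h1 h2 h3 hcm hxy)
    have h2 := fun h1 h2 h3 => hx (he.symm (h x c y m h1 h2 h3 hxy hcm))
    have hmx : m ≠ x := fun e => hx (e ▸ hcm)
    have hmy : m ≠ y := fun e => hx (he.trans (e ▸ hcm) (he.symm hxy))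
    have hcx : c ≠ x := fun e => hx (e ▸ he.refl c)
    have hcy : c ≠ y := fun e => hx (e ▸ he.symm hxy)
    have h1' : ¬ (c < x ∧ x < m ∧ m < y) := fun ⟨a, b, d⟩ => h1 a b d
    have h2' : ¬ (x < c ∧ c < y ∧ y < m) := fun ⟨a, b, d⟩ => h2 a b d
    omega
  rcases lt_trichotomy c m with h1 | h1 | h1 <;> rcases lt_trichotomy x y with h2 | h2 | h2
  · exact key hcm hxy hx h1 h2
  · rw [h2]
  · exact (key hcm (he.symm hxy) hy h1 h2).symm
  · simp [h1]
  · rw [h2]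
  · simp [h1]
  · have := key (he.symm hcm) hxy hmx h1 h2
    tauto
  · rw [h2]
  · have := key (he.symm hcm) (he.symm hxy) hmy h1 h2
    tauto

section

variable {n : ℕ} {c p : Fin n} {κ σ : NCP n}

lemma not_dualRel_pred (hp : (p : ℕ) + 1 = c) (hm : ∃ m, m ≠ c ∧ sameBlock κ c m) :
    ¬ dualRel κ p c := by
  obtain ⟨m, hmc, hm⟩ := hm
  rw [dualRel_iff]
  intro h
  have := h c m hm
  omega

lemma IsSplit.dualRel_pred (hs : IsSplit c κ σ) (hp : (p : ℕ) + 1 = c) : dualRel σ p c := by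
  rw [dualRel_iff]
  intro a b h
  rcases (hs a b).1 h with rfl | ⟨h1, h2, _⟩
  · exact Iff.rfl
  · omega

lemma IsSplit.dualRel_of_dualRel (hs : IsSplit c κ σ) {i j : Fin n} (h : dualRel κ i j) :
    dualRel σ i j := by
  rw [dualRel_iff] at h ⊢
  intro a b hab
  rcases (hs a b).1 hab with rfl | ⟨h1, h2, h3⟩
  · exact Iff.rfl
  · exact h a b h3

lemma IsSplit.dualRel_iff (hs : IsSplit c κ σ) (hκ : IsNoncrossing κ) (hp : (p : ℕ) + 1 = c)
    (hm : ∃ m, m ≠ c ∧ sameBlock κ c m) (i j : Fin n) :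
    dualRel σ i j ↔ dualRel κ i j ∨ (dualRel κ i p ∧ dualRel κ c j) ∨
      (dualRel κ i c ∧ dualRel κ p j) := by
  have heσ := dualRel_equivalence σ
  constructor
  · intro h
    by_contra! hcon
    obtain ⟨hij, h1, h2⟩ := hcon
    have he := sameBlock_equivalence κ
    rw [_root_.dualRel_iff] at h
    have hrest : ∀ a b, a ≠ c → b ≠ c → sameBlock κ a b →
        ((a ≤ i ↔ a ≤ j) ↔ (b ≤ i ↔ b ≤ j)) := fun a b ha hb hab =>
      h a b ((hs a b).2 (.inr ⟨ha, hb, hab⟩))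
    have hside : ∀ m, m ≠ c → sameBlock κ c m → ¬ ((c ≤ i ↔ c ≤ j) ↔ (m ≤ i ↔ m ≤ j)) := by
      intro m hmc hcm hcontra
      apply hij
      rw [_root_.dualRel_iff]
      have hc : ∀ b, sameBlock κ c b → ((c ≤ i ↔ c ≤ j) ↔ (b ≤ i ↔ b ≤ j)) := by
        intro b hb
        by_cases hbc : b = c
        · rw [hbc]
        · exact hcontra.trans (hrest m b hmc hbc (he.trans (he.symm hcm) hb))
      intro a b hab
      by_cases ha : a = c
      · subst ha; exact hc b hab
      by_cases hb : b = c
      · subst hb; exact (hc a (he.symm hab)).symm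
      exact hrest a b ha hb hab
    obtain ⟨m, hmc, hcm⟩ := hm
    have hms := hside m hmc hcm
    by_cases hcase : (i < c ∧ c ≤ j) ∨ (c ≤ j ∧ j < i) ∨ (j < i ∧ i < c)
    on_goal 1 => refine h1 ?_ ?_
    on_goal 3 => refine h2 ?_ ?_
    all_goals
      rw [_root_.dualRel_iff]
      intro x y hxy
      by_cases hx : sameBlock κ c x
      · have hy := he.trans hx hxy
        have hxs : x = c ∨ _ := or_iff_not_imp_left.2 fun e => hside x e hx
        have hys : y = c ∨ _ := or_iff_not_imp_left.2 fun e => hside y e hy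
        omega
      · have hxc : x ≠ c := fun e => hx (e ▸ he.refl _)
        have hyc : y ≠ c := fun e => hx (he.symm (e ▸ hxy))
        have hsep := hκ.not_separated hcm hxy hx
        have hr := hrest x y hxc hyc hxy
        omega
  · have hpc := hs.dualRel_pred hp
    rintro (h | ⟨h, h'⟩ | ⟨h, h'⟩)
    · exact hs.dualRel_of_dualRel h
    · exact heσ.trans (hs.dualRel_of_dualRel h) (heσ.trans hpc (hs.dualRel_of_dualRel h'))
    · exact heσ.trans (hs.dualRel_of_dualRel h)
        (heσ.trans (heσ.symm hpc) (hs.dualRel_of_dualRel h'))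

end

section Transversal

variable {α : Type*} {R S : α → α → Prop} {P : α → Prop}

lemma transversal_isolate (hR : Equivalence R) {c : α} (hc : ∃ m, m ≠ c ∧ R c m)
    (hS : ∀ a b, S a b ↔ a = b ∨ (a ≠ c ∧ b ≠ c ∧ R a b)) :
    (∀ a, ∃! b, S a b ∧ P b) ↔ P c ∧ ∀ a, ∃! b, R a b ∧ (P b ∧ b ≠ c) := by
  obtain ⟨m, hmc, hm⟩ := hc
  have hr := hR.refl
  have hsy : ∀ {x y}, R x y → R y x := hR.symm
  have ht : ∀ {x y z}, R x y → R y z → R x z := hR.trans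
  constructor
  · intro h
    refine ⟨?_, fun a => ?_⟩
    · obtain ⟨b, ⟨hb, hP⟩, -⟩ := h c
      grind
    · by_cases ha : a = c
      · subst ha
        obtain ⟨b, ⟨hb, hP⟩, hu⟩ := h m
        exact ⟨b, by grind, by grind⟩
      · obtain ⟨b, ⟨hb, hP⟩, hu⟩ := h a
        exact ⟨b, by grind, by grind⟩
  · rintro ⟨hPc, h⟩ a
    by_cases ha : a = c
    · subst ha
      exact ⟨a, by grind, by grind⟩
    · obtain ⟨b, ⟨hb, hP⟩, hu⟩ := h a
      exact ⟨b, by grind, by grind⟩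

lemma transversal_merge (hR : Equivalence R) {u v : α} (huv : ¬ R u v)
    (hS : ∀ a b, S a b ↔ R a b ∨ (R a u ∧ R v b) ∨ (R a v ∧ R u b)) :
    (∀ a, ∃! b, S a b ∧ P b) ↔
      (¬ P u ∧ ∀ a, ∃! b, R a b ∧ (P b ∨ b = u)) ∨
      (¬ P v ∧ ∀ a, ∃! b, R a b ∧ (P b ∨ b = v)) := by
  have hr := hR.refl
  have hsy : ∀ {x y}, R x y → R y x := hR.symm
  have ht : ∀ {x y z}, R x y → R y z → R x z := hR.trans
  have back : ∀ {u v : α}, ¬ R u v →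
      (∀ a b, S a b ↔ R a b ∨ (R a u ∧ R v b) ∨ (R a v ∧ R u b)) → ¬ P u →
      (∀ a, ∃! b, R a b ∧ (P b ∨ b = u)) → ∀ a, ∃! b, S a b ∧ P b := by
    intro u v huv hS hPu h a
    by_cases hau : R a u
    · obtain ⟨b, ⟨hb, hP⟩, hu⟩ := h v
      obtain ⟨b', ⟨hb', hP'⟩, hu'⟩ := h a
      exact ⟨b, by grind, by grind⟩
    · obtain ⟨b, ⟨hb, hP⟩, hu⟩ := h a
      obtain ⟨b', ⟨hb', hP'⟩, hu'⟩ := h u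
      exact ⟨b, by grind, by grind⟩
  have forth : ∀ {u v z : α}, ¬ R u v →
      (∀ a b, S a b ↔ R a b ∨ (R a u ∧ R v b) ∨ (R a v ∧ R u b)) →
      (∀ a, ∃! b, S a b ∧ P b) → P z → R v z →
      ¬ P u ∧ ∀ a, ∃! b, R a b ∧ (P b ∨ b = u) := by
    intro u v z huv hS h hz hvz
    have huz : ∀ b, R u b → ¬ P b := by
      intro b hb hPb
      obtain ⟨w, ⟨-, -⟩, hw⟩ := h u
      have h1 := hw b ⟨by grind, hPb⟩
      have h2 := hw z ⟨by grind, hz⟩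
      grind
    refine ⟨huz u (hr u), fun a => ?_⟩
    by_cases hau : R a u
    · exact ⟨u, by grind, by grind⟩
    · obtain ⟨b, ⟨hb, hP⟩, hw⟩ := h a
      refine ⟨b, ⟨?_, .inl hP⟩, by grind⟩
      by_cases hav : R a v
      · have := hw z ⟨by grind, hz⟩
        grind
      · grind
  have hS' : ∀ a b, S a b ↔ R a b ∨ (R a v ∧ R u b) ∨ (R a u ∧ R v b) := by
    intro a b; rw [hS]; tauto
  constructor
  · intro h
    obtain ⟨z, ⟨hz, hPz⟩, -⟩ := h u
    rcases (hS u z).1 hz with h1 | h1 | h1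
    · exact .inr (forth (fun h => huv (hsy h)) hS' h hPz h1)
    · exact .inl (forth huv hS h hPz h1.2)
    · exact absurd h1.1 huv
  · rintro (⟨h, h'⟩ | ⟨h, h'⟩)
    · exact back huv hS h h'
    · exact back (fun h => huv (hsy h)) hS' h h'

lemma transversal_disjoint (hR : Equivalence R) {u v : α} (huv : ¬ R u v)
    (hu : ∀ a, ∃! b, R a b ∧ (P b ∨ b = u)) (hPu : ¬ P u)
    (hv : ∀ a, ∃! b, R a b ∧ (P b ∨ b = v)) : False := by
  obtain ⟨w, ⟨hw, hP⟩, -⟩ := hv u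
  obtain ⟨w', -, hw'⟩ := hu u
  have h1 := hw' u ⟨hR.refl u, .inr rfl⟩
  rcases hP with hP | rfl
  · have h2 := hw' w ⟨hw, .inl hP⟩
    exact hPu (by rwa [h1, ← h2])
  · exact huv hw

end Transversal

lemma card_insert_erase_eq {α : Type*} [DecidableEq α] {I : Finset α} {a b : α}
    (ha : a ∉ I) (hb : b ∈ I) : (insert a (I.erase b)).card = I.card := by
  rw [card_insert_of_notMem (by simp [ha]), card_erase_add_one hb]

lemma mul_one_add_matE_apply {k m : ℕ} (Y : Matrix (Fin k) (Fin m) ℝ) (p q : Fin m) (t : ℝ)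
    (r : Fin k) (s : Fin m) :
    (Y * (1 + matE m p q t) : Matrix (Fin k) (Fin m) ℝ) r s = Y r s + if s = q then t * Y r p else 0 := by
  rw [Matrix.mul_add, Matrix.mul_one, Matrix.add_apply, Matrix.mul_apply]
  congr 1
  rw [Finset.sum_eq_single p]
  · simp [matE, Fin.ext_iff, mul_comm]
  · intro b _ hb
    simp [matE, Fin.ext_iff.not.1 hb]
  · simp

lemma minorOn_mul_one_add_matE {k m : ℕ} (Y : Matrix (Fin k) (Fin m) ℝ) {p q : Fin m}
    (hpq : (p : ℕ) + 1 = q ∨ (q : ℕ) + 1 = p) (t : ℝ) {I : Finset (Fin m)} (hI : I.card = k) :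
    minorOn (Y * (1 + matE m p q t)) I =
      minorOn Y I + t * if p ∉ I ∧ q ∈ I then minorOn Y (insert p (I.erase q)) else 0 := by
  have hne : p ≠ q := fun h => by subst h; omega
  by_cases hq : q ∈ I
  swap
  · simp only [hq, and_false, if_false, mul_zero, add_zero, minorOn, hI, dif_pos]
    congr 1
    ext r s
    have : I.orderEmbOfFin hI s ≠ q := fun h => hq (h ▸ I.orderEmbOfFin_mem hI s)
    simp [mul_one_add_matE_apply, this]
  obtain ⟨r, hr⟩ : ∃ r, I.orderEmbOfFin hI r = q := by
    have : q ∈ Set.range (I.orderEmbOfFin hI) := by simpa using hq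
    exact this
  have hinj := (I.orderEmbOfFin hI).injective
  set M := Y.submatrix id fun r => I.orderEmbOfFin hI r with hM
  have hM' : (Y * (1 + matE m p q t)).submatrix id (fun r => I.orderEmbOfFin hI r) =
      M.updateCol r ((fun i => M i r) + t • fun i => Y i p) := by
    ext i s
    by_cases hs : s = r
    · subst hs
      simp [mul_one_add_matE_apply, hr, hM]
    · have : I.orderEmbOfFin hI s ≠ q := fun h => hs (hinj (h.trans hr.symm))
      simp [mul_one_add_matE_apply, hM, this, hs]
  have hself : M.updateCol r (fun i => M i r) = M := by
    ext i s
    by_cases hs : s = r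
    · subst hs; simp
    · simp [hs]
  have hdet : (M.updateCol r fun i => Y i p).det =
      if p ∉ I ∧ q ∈ I then minorOn Y (insert p (I.erase q)) else 0 := by
    by_cases hp : p ∈ I
    · obtain ⟨r', hr'⟩ : ∃ r, I.orderEmbOfFin hI r = p := by
        have : p ∈ Set.range (I.orderEmbOfFin hI) := by simpa using hp
        exact this
      have hrr : r' ≠ r := fun h => hne (by rw [← hr', h, hr])
      simp only [hp, not_true, false_and, if_false]
      refine Matrix.det_zero_of_column_eq hrr fun i => ?_
      simp [hrr, hM, hr']
    · have hcard : (insert p (I.erase q)).card = k :=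
        (card_insert_erase_eq hp hq).trans hI
      simp only [hp, hq, not_false_eq_true, and_self, if_true, minorOn, hcard, dif_pos]
      have hu : (fun s => if s = r then p else I.orderEmbOfFin hI s) =
          (insert p (I.erase q)).orderEmbOfFin hcard := by
        refine orderEmbOfFin_unique hcard (fun s => ?_) fun s s' hss => ?_
        · by_cases hs : s = r
          · simp [hs]
          · have : I.orderEmbOfFin hI s ≠ q := fun h => hs (hinj (h.trans hr.symm))
            simp [hs, this]
        · have hlt := (I.orderEmbOfFin hI).strictMono hss
          have hpn : ∀ s, I.orderEmbOfFin hI s ≠ p := fun s h =>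
            hp (h ▸ I.orderEmbOfFin_mem hI s)
          have h1 := hpn s
          have h2 := hpn s'
          split_ifs with hs hs' hs'
          · omega
          · rw [hs, hr] at hlt
            omega
          · rw [hs', hr] at hlt
            omega
          · exact hlt
      congr 1
      ext i s
      rw [Matrix.submatrix_apply, ← hu]
      by_cases hs : s = r
      · subst hs; simp
      · simp [hs, hM]
  have h1 : minorOn (Y * (1 + matE m p q t)) I = _ := dif_pos hI
  have h2 : minorOn Y I = M.det := dif_pos hI
  rw [h1, h2, hM', Matrix.det_updateCol_add, Matrix.det_updateCol_smul, hself, hdet]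

lemma minorOn_mul_uB {n : ℕ} (X : Matrix (Fin (n - 1)) (Fin (2 * n)) ℝ) {c p : Fin n}
    (hp : (p : ℕ) + 1 = c) (t : ℝ) {I : Finset (Fin (2 * n))} (hI : I.card = n - 1) :
    minorOn (X * uB (2 * n) (2 * (c : ℕ) + 1) t) I = minorOn X I +
      t * ((if bar c ∉ I ∧ til p ∈ I then minorOn X (insert (bar c) (I.erase (til p))) else 0) +
        if bar c ∉ I ∧ til c ∈ I then minorOn X (insert (bar c) (I.erase (til c))) else 0) := by
  have hx : xB (2 * n) (2 * (c : ℕ) + 1) t = 1 + matE (2 * n) (bar c) (til c) t := rfl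
  have hy : yB (2 * n) (2 * (c : ℕ) + 1 - 1) t = 1 + matE (2 * n) (bar c) (til p) t := by
    have : 2 * (c : ℕ) + 1 - 1 - 1 = 2 * (p : ℕ) + 1 := by omega
    simp only [yB, this]
    rfl
  rw [uB, hx, hy, ← Matrix.mul_assoc,
    minorOn_mul_one_add_matE _ (.inr (by simp only [bar, til]; omega)) t hI,
    minorOn_mul_one_add_matE X (.inl rfl) t hI]
  by_cases h : bar c ∉ I ∧ til p ∈ I
  · have hcard : (insert (bar c) (I.erase (til p))).card = n - 1 :=
      (card_insert_erase_eq h.1 h.2).trans hI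
    simp only [h, not_false_eq_true, and_self, if_true,
      minorOn_mul_one_add_matE X (p := bar c) (q := til c) (.inl rfl) t hcard]
    simp only [mem_insert_self, not_true, false_and, if_false, mul_zero, add_zero]
    ring
  · simp only [h, if_false]
    ring

section

variable {n : ℕ} {c p : Fin n} {κ σ : NCP n}

lemma concordant_exchange_iff {u : Fin n} {I : Finset (Fin (2 * n))} (hI : I.card = n - 1)
    (hc : bar c ∉ I) (hu : til u ∈ I) :
    Concordant κ (insert (bar c) (I.erase (til u))) ↔
      (∀ a, ∃! b, sameBlock κ a b ∧ (bar b ∉ I ∧ b ≠ c)) ∧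
      ∀ i, ∃! j, dualRel κ i j ∧ (til j ∉ I ∨ j = u) := by
  have hcard : (insert (bar c) (I.erase (til u))).card = n - 1 :=
    (card_insert_erase_eq hc hu).trans hI
  have hbar : ∀ b, bar b ∉ insert (bar c) (I.erase (til u)) ↔ (bar b ∉ I ∧ b ≠ c) := by
    intro b
    simp only [mem_insert, mem_erase, bar_injective.eq_iff, ne_eq, bar_ne_til]
    tauto
  have htil : ∀ j, til j ∉ insert (bar c) (I.erase (til u)) ↔ (til j ∉ I ∨ j = u) := by
    intro j
    simp only [mem_insert, mem_erase, til_injective.eq_iff, ne_eq, (bar_ne_til _ _).symm]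
    tauto
  simp only [concordant_iff, hcard, true_and, hbar, htil]

lemma IsSplit.concordant_iff (hs : IsSplit c κ σ) (hκ : IsNoncrossing κ) (hp : (p : ℕ) + 1 = c)
    (hm : ∃ m, m ≠ c ∧ sameBlock κ c m) {I : Finset (Fin (2 * n))} (hI : I.card = n - 1) :
    Concordant σ I ↔
      ((bar c ∉ I ∧ til p ∈ I) ∧ Concordant κ (insert (bar c) (I.erase (til p)))) ∨
      ((bar c ∉ I ∧ til c ∈ I) ∧ Concordant κ (insert (bar c) (I.erase (til c)))) := by
  have h1 := transversal_isolate (P := fun b => bar b ∉ I) (sameBlock_equivalence κ) hm hs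
  have h2 := transversal_merge (P := fun j => til j ∉ I) (dualRel_equivalence κ)
    (not_dualRel_pred hp hm) (hs.dualRel_iff hκ hp hm)
  simp only [not_not] at h2
  rw [_root_.concordant_iff, h1, h2]
  by_cases hc : bar c ∈ I
  · simp [hc]
  have e : ∀ u : Fin n, ((bar c ∉ I ∧ til u ∈ I) ∧
      Concordant κ (insert (bar c) (I.erase (til u)))) ↔ til u ∈ I ∧
        (∀ a, ∃! b, sameBlock κ a b ∧ (bar b ∉ I ∧ b ≠ c)) ∧
        ∀ i, ∃! j, dualRel κ i j ∧ (til j ∉ I ∨ j = u) := by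
    intro u
    by_cases hu : til u ∈ I
    · rw [concordant_exchange_iff hI hc hu]
      simp only [hc, hu, not_false_eq_true, and_self, true_and]
    · simp only [hu, and_false, false_and]
  rw [e, e, hI]
  simp only [hc, not_false_eq_true, true_and]
  rw [and_left_comm, and_left_comm (a := til c ∈ I), ← and_or_left]

lemma Concordant.exists_sameBlock {J : Finset (Fin (2 * n))} (h : Concordant κ J)
    (hc : bar c ∈ J) : ∃ m, m ≠ c ∧ sameBlock κ c m := by
  obtain ⟨m, ⟨hm, hm'⟩, -⟩ := ((_root_.concordant_iff κ J).1 h).2.1 c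
  exact ⟨m, fun e => hm' (e ▸ hc), hm⟩

lemma biUnion_mergeSet_eq (hp : (p : ℕ) + 1 = c) {I : Finset (Fin (2 * n))}
    (hI : I.card = n - 1) :
    ⋃ σ ∈ {σ | σ ∈ ESet I ∧ {c} ∈ σ.parts}, mergeSet c σ =
      {κ | (bar c ∉ I ∧ til p ∈ I) ∧ κ ∈ ESet (insert (bar c) (I.erase (til p)))} ∪
      {κ | (bar c ∉ I ∧ til c ∈ I) ∧ κ ∈ ESet (insert (bar c) (I.erase (til c)))} := by
  ext κ
  simp only [Set.mem_iUnion, Set.mem_ofPred_eq, exists_prop, Set.mem_union, ESet]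
  constructor
  · rintro ⟨σ, ⟨⟨-, hσ⟩, hc⟩, hκ⟩
    obtain ⟨hκ, hm, hs⟩ := (mem_mergeSet_iff c κ σ).1 ⟨hc, hκ⟩
    have := (hs.concordant_iff hκ hp hm hI).1 hσ
    tauto
  · intro h
    have hκ : IsNoncrossing κ := h.elim (·.2.1) (·.2.1)
    have hm : ∃ m, m ≠ c ∧ sameBlock κ c m := by
      rcases h with ⟨-, -, h⟩ | ⟨-, -, h⟩ <;> exact h.exists_sameBlock (mem_insert_self _ _)
    obtain ⟨σ, hs⟩ := exists_isSplit c κ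
    have hmem := (mem_mergeSet_iff c κ σ).2 ⟨hκ, hm, hs⟩
    have := (hs.concordant_iff hκ hp hm hI).2 (by tauto)
    exact ⟨σ, ⟨⟨hs.isNoncrossing hκ, this⟩, hmem.1⟩, hmem.2⟩

lemma disjoint_exchange (hp : (p : ℕ) + 1 = c) {I : Finset (Fin (2 * n))}
    (hI : I.card = n - 1) :
    Disjoint {κ | (bar c ∉ I ∧ til p ∈ I) ∧ κ ∈ ESet (insert (bar c) (I.erase (til p)))}
      {κ | (bar c ∉ I ∧ til c ∈ I) ∧ κ ∈ ESet (insert (bar c) (I.erase (til c)))} := by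
  rw [Set.disjoint_left]
  rintro κ ⟨⟨hc, hpI⟩, -, h1⟩ ⟨⟨-, hcI⟩, -, h2⟩
  have hm := h1.exists_sameBlock (mem_insert_self _ _)
  exact transversal_disjoint (P := fun j => til j ∉ I) (dualRel_equivalence κ)
    (not_dualRel_pred hp hm) ((concordant_exchange_iff hI hc hpI).1 h1).2 (by simpa using hpI)
    ((concordant_exchange_iff hI hc hcI).1 h2).2

lemma pairwiseDisjoint_mergeSet (c : Fin n) (s : Set (NCP n)) :
    {σ | σ ∈ s ∧ {c} ∈ σ.parts}.PairwiseDisjoint (mergeSet c) := by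
  rintro σ ⟨-, hσ⟩ τ ⟨-, hτ⟩ hne
  refine Set.disjoint_left.2 fun κ h h' => hne ?_
  exact ((mem_mergeSet_iff c κ σ).1 ⟨hσ, h⟩).2.2.unique ((mem_mergeSet_iff c κ τ).1 ⟨hτ, h'⟩).2.2

end

lemma finsum_mem_setOf_and_left {α : Type*} (q : Prop) (s : Set α) (f : α → ℝ) :
    ∑ᶠ x ∈ {x | q ∧ x ∈ s}, f x = if q then ∑ᶠ x ∈ s, f x else 0 := by
  by_cases hq : q <;> simp [hq]

theorem stmt17 (n k : ℕ) (hk2 : 2 ≤ k) (hkn : k ≤ n)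
    (X : Matrix (Fin (n-1)) (Fin (2*n)) ℝ) (L : NCP n → ℝ)
    (hL : ∀ I : Finset (Fin (2*n)), I.card = n-1 → minorOn X I = ∑ᶠ σ ∈ ESet I, L σ)
    (t : ℝ) (L' : NCP n → ℝ) (kb : Fin n) (hkb : (kb:ℕ) = k - 1)
    (hL'1 : ∀ σ : NCP n, ({kb} : Finset (Fin n)) ∈ σ.parts →
      L' σ = L σ + t * ∑ᶠ κ ∈ mergeSet kb σ, L κ)
    (hL'2 : ∀ σ : NCP n, ({kb} : Finset (Fin n)) ∉ σ.parts → L' σ = L σ) :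
    ∀ I : Finset (Fin (2*n)), I.card = n-1 →
      minorOn (X * uB (2*n) (2*k-1) t) I = ∑ᶠ σ ∈ ESet I, L' σ := by
  intro I hI
  obtain ⟨p, hp⟩ : ∃ p : Fin n, (p : ℕ) + 1 = kb := ⟨⟨kb - 1, by omega⟩, by simp only; omega⟩
  have hterm : ∀ u : Fin n,
      (if bar kb ∉ I ∧ til u ∈ I then minorOn X (insert (bar kb) (I.erase (til u))) else 0) =
      ∑ᶠ κ ∈ {κ | (bar kb ∉ I ∧ til u ∈ I) ∧ κ ∈ ESet (insert (bar kb) (I.erase (til u)))},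
        L κ := by
    intro u
    rw [finsum_mem_setOf_and_left]
    split_ifs with h
    · exact hL _ ((card_insert_erase_eq h.1 h.2).trans hI)
    · rfl
  have hL' : ∀ σ, L' σ = L σ +
      t * if ({kb} : Finset (Fin n)) ∈ σ.parts then ∑ᶠ κ ∈ mergeSet kb σ, L κ else 0 := by
    intro σ
    split_ifs with h
    · exact hL'1 σ h
    · rw [hL'2 σ h, mul_zero, add_zero]
  have hk : 2 * k - 1 = 2 * (kb : ℕ) + 1 := by omega
  rw [hk, minorOn_mul_uB X hp t hI, hL I hI, hterm, hterm,
    ← finsum_mem_union (disjoint_exchange hp hI) (Set.toFinite _) (Set.toFinite _),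
    ← biUnion_mergeSet_eq hp hI,
    finsum_mem_biUnion (pairwiseDisjoint_mergeSet kb _) (Set.toFinite _)
      fun _ _ => Set.toFinite _]
  simp only [hL']
  rw [finsum_mem_add_distrib (Set.toFinite _)]
  have hset : {σ | σ ∈ ESet I ∧ {kb} ∈ σ.parts} =
      ESet I ∩ {σ : NCP n | {kb} ∈ σ.parts} := rfl
  rw [hset]
  simp only [finsum_mem_eq_toFinset_sum, mul_sum, Set.toFinset_inter, Set.toFinset_ofPred,
    ← filter_mem_eq_inter, sum_filter, mul_ite, mul_zero]
  simp

end
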